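/- Let f : ℝ → ℝ be continuous and nondecreasing, and let u ∈ C²(ℝⁿ) satisfy ℐu(x) = f(u(x)) for every x ∈ ℝⁿ. Assume that |u(x)| ≤ K(1 + |x|^κ) for all x ∈ ℝⁿ, for some K ≥ 0 and κ ∈ [0, 2s). If f is not identically zero, then u is constant, say u(x) = c for all x ∈ ℝⁿ, and f(c) = 0. -/

import Mathlib

open MeasureTheory
open scoped RealInnerProductSpace

/-- The anisotropic integro-differential operator
`ℐu(x) = ∫_{S^{n-1} × ℝ} (u(x + rϑ) + u(x − rϑ) − 2u(x)) dμ(ϑ) dr / |r|^{1+2s}`. -/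
noncomputable def opI (n : ℕ) (s : ℝ)
    (μ : Measure (Metric.sphere (0 : EuclideanSpace ℝ (Fin n)) 1))
    (u : EuclideanSpace ℝ (Fin n) → ℝ) (x : EuclideanSpace ℝ (Fin n)) : ℝ :=
  ∫ p : Metric.sphere (0 : EuclideanSpace ℝ (Fin n)) 1 × ℝ,
    (u (x + p.2 • (p.1 : EuclideanSpace ℝ (Fin n))) +
      u (x - p.2 • (p.1 : EuclideanSpace ℝ (Fin n))) - 2 * u x) / |p.2| ^ (1 + 2 * s)
    ∂(μ.prod volume)

theorem rpow_add_sub_le_min {t h b : ℝ} (ht : 1 ≤ t) (hh : 0 ≤ h) (hb : 0 ≤ b) (hb1 : b ≤ 1) :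
    (t + h) ^ b - t ^ b ≤ min h (h ^ b) := by
  have ht0 : 0 < t := by linarith
  refine le_min ?_ ?_
  · have h1 : (t + h) ^ b = t ^ b * (1 + h / t) ^ b := by
      rw [← Real.mul_rpow ht0.le (by positivity)]
      congr 1
      field_simp
    have h2 : (1 + h / t) ^ b ≤ 1 + b * (h / t) :=
      rpow_one_add_le_one_add_mul_self (by have : 0 ≤ h / t := by positivity
                                           linarith) hb hb1
    have h3 : t ^ b ≤ t := by
      simpa using Real.rpow_le_rpow_of_exponent_le ht hb1
    have h4 : t ^ b * (1 + h / t) ^ b ≤ t ^ b * (1 + b * (h / t)) := by gcongr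
    have h5 : t ^ b * (b * (h / t)) ≤ t * (1 * (h / t)) := by gcongr
    have h6 : t * (1 * (h / t)) = h := by field_simp
    rw [h1]
    linarith [mul_add (t ^ b) 1 (b * (h / t))]
  · linarith [Real.rpow_add_le_add_rpow ht0.le hh hb hb1]

/-- The second difference `u(x + z) + u(x - z) - 2u(x)`. -/
def secondDiff {E : Type*} [AddCommGroup E] (u : E → ℝ) (x z : E) : ℝ :=
  u (x + z) + u (x - z) - 2 * u x

/-- The weight `(1 + ‖x‖²) ^ b`. -/
noncomputable def weight {E : Type*} [NormedAddCommGroup E] (b : ℝ) (x : E) : ℝ :=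
  (1 + ‖x‖ ^ 2) ^ b

section Weight

variable {E : Type*} [NormedAddCommGroup E]

theorem weight_pos (b : ℝ) (x : E) : 0 < weight b x := by
  unfold weight; positivity

theorem continuous_weight (b : ℝ) : Continuous (weight b : E → ℝ) := by
  unfold weight
  exact Continuous.rpow_const (by fun_prop) fun x => Or.inl (by positivity)

theorem weight_mono {a b : ℝ} (h : a ≤ b) (x : E) : weight a x ≤ weight b x :=
  Real.rpow_le_rpow_of_exponent_le (by nlinarith [sq_nonneg ‖x‖]) h

theorem weight_add_le {b : ℝ} (hb : 0 ≤ b) (x y : E) (hy : ‖y‖ ≤ 1) :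
    weight b (x + y) ≤ 3 ^ b * weight b x := by
  unfold weight
  rw [← Real.mul_rpow (by norm_num) (by positivity)]
  have h := norm_add_le x y
  gcongr
  nlinarith [norm_nonneg x, norm_nonneg y, norm_nonneg (x + y), sq_nonneg (‖x‖ - 1)]

theorem weight_add_le_of_one_le {b R : ℝ} (hb : 0 ≤ b) {x z : E} (hx : ‖x‖ ≤ R)
    (hz : 1 ≤ ‖z‖) : weight b (x + z) ≤ (1 + (R + 1) ^ 2) ^ b * ‖z‖ ^ (2 * b) := by
  have hz2 : ‖z‖ ^ (2 * b) = (‖z‖ ^ 2) ^ b := by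
    rw [← Real.rpow_natCast, ← Real.rpow_mul (norm_nonneg z)]
    norm_num
  have hR : 0 ≤ R := (norm_nonneg x).trans hx
  unfold weight
  rw [hz2, ← Real.mul_rpow (by positivity) (by positivity)]
  have h1 : ‖x + z‖ ≤ (R + 1) * ‖z‖ := (norm_add_le x z).trans (by nlinarith)
  have h2 : ‖x + z‖ ^ 2 ≤ ((R + 1) * ‖z‖) ^ 2 := by gcongr
  gcongr
  nlinarith

theorem rpow_norm_le_weight {κ : ℝ} (hκ : 0 ≤ κ) (x : E) : ‖x‖ ^ κ ≤ weight (κ / 2) x := by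
  unfold weight
  have : ‖x‖ ^ κ = (‖x‖ ^ 2) ^ (κ / 2) := by
    rw [← Real.rpow_natCast, ← Real.rpow_mul (norm_nonneg x)]
    congr 1
    push_cast
    ring
  rw [this]
  gcongr
  linarith

theorem secondDiff_weight_le [InnerProductSpace ℝ E] {b : ℝ} (hb : 0 ≤ b) (hb1 : b ≤ 1)
    (x z : E) : secondDiff (weight b) x z ≤ 2 * min (‖z‖ ^ 2) (‖z‖ ^ (2 * b)) := by
  have hc := (Real.concaveOn_rpow hb hb1).2
    (show 1 + ‖x + z‖ ^ 2 ∈ Set.Ici 0 from Set.mem_Ici.2 (by positivity))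
    (show 1 + ‖x - z‖ ^ 2 ∈ Set.Ici 0 from Set.mem_Ici.2 (by positivity))
    (show (0 : ℝ) ≤ 1 / 2 by norm_num) (show (0 : ℝ) ≤ 1 / 2 by norm_num) (by norm_num)
  have hp : ‖x + z‖ ^ 2 + ‖x - z‖ ^ 2 = 2 * (‖x‖ ^ 2 + ‖z‖ ^ 2) := by
    have := parallelogram_law_with_norm ℝ x z
    nlinarith
  have he : (1 / 2 : ℝ) • (1 + ‖x + z‖ ^ 2) + (1 / 2 : ℝ) • (1 + ‖x - z‖ ^ 2)
      = (1 + ‖x‖ ^ 2) + ‖z‖ ^ 2 := by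
    simp only [smul_eq_mul]; linarith
  rw [he] at hc
  have hm := rpow_add_sub_le_min (t := 1 + ‖x‖ ^ 2) (h := ‖z‖ ^ 2)
    (by nlinarith [sq_nonneg ‖x‖]) (sq_nonneg _) hb hb1
  have hz : (‖z‖ ^ 2) ^ b = ‖z‖ ^ (2 * b) := by
    rw [← Real.rpow_natCast, ← Real.rpow_mul (norm_nonneg z)]
    norm_num
  rw [hz] at hm
  simp only [smul_eq_mul] at hc
  unfold secondDiff weight
  linarith

/-- `g` grows at most like `o(weight b)` from above. -/
def IsSubweight (b : ℝ) (g : E → ℝ) : Prop :=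
  ∀ ε > 0, ∃ M, ∀ x, g x ≤ M + ε * weight b x

theorem IsSubweight.add {b : ℝ} {g h : E → ℝ} (hg : IsSubweight b g) (hh : IsSubweight b h) :
    IsSubweight b fun x => g x + h x := by
  intro ε hε
  obtain ⟨M, hM⟩ := hg (ε / 2) (by positivity)
  obtain ⟨N, hN⟩ := hh (ε / 2) (by positivity)
  exact ⟨M + N, fun x => by linarith [hM x, hN x]⟩

theorem isSubweight_of_le {a b C : ℝ} (hab : a < b) (ha : 0 ≤ a) {g : E → ℝ}
    (hg : ∀ x, g x ≤ C * weight a x) : IsSubweight b g := by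
  intro ε hε
  have hlo : (fun t : ℝ => C * t ^ a) =o[Filter.atTop] fun t : ℝ => t ^ b := by
    refine Asymptotics.IsLittleO.const_mul_left ?_ C
    refine (Asymptotics.isLittleO_iff_tendsto' ?_).2 ?_
    · filter_upwards [Filter.eventually_gt_atTop 0] with t ht h0
      exact absurd h0 (Real.rpow_pos_of_pos ht b).ne'
    · refine (tendsto_rpow_neg_atTop (sub_pos.2 hab)).congr' ?_
      filter_upwards [Filter.eventually_gt_atTop 0] with t ht
      rw [← Real.rpow_sub ht, neg_sub]
  obtain ⟨T, hT⟩ := Filter.eventually_atTop.1 (hlo.bound hε)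
  refine ⟨|C| * (max T 1) ^ a, fun x => (hg x).trans ?_⟩
  have hw := weight_pos b x
  by_cases h : T ≤ 1 + ‖x‖ ^ 2
  · have := hT _ h
    have h1 : C * weight a x ≤ ε * weight b x := by
      refine (le_abs_self _).trans (this.trans_eq ?_)
      rw [Real.norm_of_nonneg (by positivity)]
      rfl
    have : 0 ≤ |C| * (max T 1) ^ a := by positivity
    linarith
  · push Not at h
    have h2 : weight a x ≤ (max T 1) ^ a := by
      unfold weight
      gcongr
      exact h.le.trans (le_max_left _ _)
    have h3 : C * weight a x ≤ |C| * weight a x :=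
      mul_le_mul_of_nonneg_right (le_abs_self C) (weight_pos a x).le
    have h4 : |C| * weight a x ≤ |C| * (max T 1) ^ a := by gcongr
    have : 0 ≤ ε * weight b x := by positivity
    linarith

theorem IsSubweight.exists_max [ProperSpace E] {b : ℝ} (hb : 0 < b) {g : E → ℝ}
    (hg : IsSubweight b g) (hc : Continuous g) {ε : ℝ} (hε : 0 < ε) :
    ∃ x₀, ∀ x, g x - ε * weight b x ≤ g x₀ - ε * weight b x₀ := by
  obtain ⟨M, hM⟩ := hg (ε / 2) (by positivity)
  refine Continuous.exists_forall_ge (f := fun x => g x - ε * weight b x)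
    (hc.sub (continuous_const.mul (continuous_weight b))) ?_
  have h1 : Filter.Tendsto (fun x : E => ‖x‖) (Filter.cocompact E) Filter.atTop :=
    tendsto_norm_cocompact_atTop
  have h2 : Filter.Tendsto (fun x : E => ‖x‖ ^ (2 * b)) (Filter.cocompact E) Filter.atTop :=
    (tendsto_rpow_atTop (by positivity)).comp h1
  have h3 : Filter.Tendsto (fun x : E => -M + ε / 2 * ‖x‖ ^ (2 * b)) (Filter.cocompact E)
      Filter.atTop :=
    Filter.tendsto_atTop_add_const_left _ _ (h2.const_mul_atTop (by positivity))
  refine Filter.tendsto_atBot_mono (fun x => ?_) (Filter.tendsto_neg_atTop_atBot.comp h3)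
  have h4 := rpow_norm_le_weight (κ := 2 * b) (by positivity) x
  rw [show 2 * b / 2 = b by ring] at h4
  have h5 := hM x
  have h6 : ε / 2 * ‖x‖ ^ (2 * b) ≤ ε / 2 * weight b x := by gcongr
  simp only [Function.comp]
  linarith

end Weight
section SecondDiff

variable {E : Type*} [NormedAddCommGroup E] [NormedSpace ℝ E]

theorem abs_secondDiff_le_of_lipschitz_fderiv {u : E → ℝ} (hu : Differentiable ℝ u) {L R : ℝ}
    (hL : ∀ a ∈ Metric.closedBall (0 : E) (R + 1), ∀ b ∈ Metric.closedBall (0 : E) (R + 1),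
      ‖fderiv ℝ u a - fderiv ℝ u b‖ ≤ L * ‖a - b‖)
    {x z : E} (hx : ‖x‖ ≤ R) (hz : ‖z‖ ≤ 1) (hL0 : 0 ≤ L) :
    |secondDiff u x z| ≤ 2 * L * ‖z‖ ^ 2 := by
  have hder : ∀ w : E, HasFDerivAt (fun w => u (x + w) + u (x - w))
      (fderiv ℝ u (x + w) - fderiv ℝ u (x - w)) w := by
    intro w
    have h1 : HasFDerivAt (fun w => u (x + w)) (fderiv ℝ u (x + w)) w :=
      ((hu (x + w)).hasFDerivAt.comp w ((hasFDerivAt_id w).const_add x)).congr_fderiv (by ext; simp)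
    have h2 : HasFDerivAt (fun w => u (x - w)) (-fderiv ℝ u (x - w)) w :=
      ((hu (x - w)).hasFDerivAt.comp w ((hasFDerivAt_id w).const_sub x)).congr_fderiv (by ext; simp)
    exact (h1.add h2).congr_fderiv (sub_eq_add_neg _ _).symm
  have hmv := (convex_closedBall (0 : E) ‖z‖).norm_image_sub_le_of_norm_hasFDerivWithin_le
    (f := fun w => u (x + w) + u (x - w)) (C := 2 * L * ‖z‖)
    (fun w _ => (hder w).hasFDerivWithinAt) (fun w hw => ?_)
    (Metric.mem_closedBall_self (norm_nonneg z)) (show z ∈ _ by simp)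
  · unfold secondDiff
    rw [Real.norm_eq_abs] at hmv
    convert hmv using 1
    · simp only [add_zero, sub_zero]
      ring_nf
    · simp only [sub_zero]
      ring
  · have hw' : ‖w‖ ≤ ‖z‖ := by simpa using hw
    have ha : ‖x + w‖ ≤ R + 1 := (norm_add_le _ _).trans (by linarith)
    have hb : ‖x - w‖ ≤ R + 1 := (norm_sub_le _ _).trans (by linarith)
    refine (hL _ (by simpa using ha) _ (by simpa using hb)).trans ?_
    have : ‖x + w - (x - w)‖ ≤ 2 * ‖z‖ := by
      rw [show x + w - (x - w) = (2 : ℝ) • w by rw [two_smul]; abel, norm_smul]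
      norm_num
      exact hw'
    nlinarith

theorem exists_lipschitz_fderiv [ProperSpace E] {u : E → ℝ} (hu : ContDiff ℝ 2 u) (R : ℝ) :
    ∃ L, 0 ≤ L ∧ ∀ a ∈ Metric.closedBall (0 : E) R, ∀ b ∈ Metric.closedBall (0 : E) R,
      ‖fderiv ℝ u a - fderiv ℝ u b‖ ≤ L * ‖a - b‖ := by
  have h1 : ContDiff ℝ 1 (fderiv ℝ u) := hu.fderiv_right (by norm_num)
  have h2 : Continuous (fderiv ℝ (fderiv ℝ u)) := h1.continuous_fderiv (by norm_num)
  obtain ⟨L, hL⟩ := (isCompact_closedBall (0 : E) R).exists_bound_of_continuousOn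
    (E := E →L[ℝ] E →L[ℝ] ℝ) h2.continuousOn
  refine ⟨max L 0, le_max_right _ _, fun a ha b hb => ?_⟩
  exact (convex_closedBall (0 : E) R).norm_image_sub_le_of_norm_fderiv_le
    (fun w _ => h1.differentiable (by norm_num) w)
    (fun w hw => (hL w hw).trans (le_max_left _ _)) hb ha

/-- For a `C²` function of subcritical growth, second differences are controlled by
`min ‖z‖² ‖z‖^(2b)`, locally uniformly in the base point. -/
theorem exists_abs_secondDiff_le [ProperSpace E] {u : E → ℝ} (hu : ContDiff ℝ 2 u)
    {b C : ℝ} (hb : 0 ≤ b) (hb1 : b ≤ 1) (hC : 0 ≤ C) (hg : ∀ x, |u x| ≤ C * weight b x) (R : ℝ) :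
    ∃ D, 0 ≤ D ∧ ∀ x, ‖x‖ ≤ R → ∀ z,
      |secondDiff u x z| ≤ D * min (‖z‖ ^ 2) (‖z‖ ^ (2 * b)) := by
  obtain ⟨L, hL0, hL⟩ := exists_lipschitz_fderiv hu (R + 1)
  set B := (1 + (R + 1) ^ 2) ^ b with hB
  have hB0 : 0 ≤ B := by positivity
  refine ⟨2 * L + 4 * C * B, by positivity, fun x hx z => ?_⟩
  rcases le_total ‖z‖ 1 with hz | hz
  · have h1 := abs_secondDiff_le_of_lipschitz_fderiv (hu.differentiable (by norm_num)) hL hx hz hL0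
    have h2 : ‖z‖ ^ 2 ≤ ‖z‖ ^ (2 * b) := by
      rcases (norm_nonneg z).eq_or_lt with h0 | h0
      · rw [← h0]
        have : (0 : ℝ) ≤ 0 ^ (2 * b) := Real.rpow_nonneg le_rfl _
        simpa using this
      · rw [← Real.rpow_natCast]
        exact Real.rpow_le_rpow_of_exponent_ge h0 hz (by push_cast; linarith)
    rw [min_eq_left h2]
    have : 0 ≤ 4 * C * B * ‖z‖ ^ 2 := by positivity
    linarith
  · have h2 : ‖z‖ ^ (2 * b) ≤ ‖z‖ ^ 2 := by
      rw [← Real.rpow_natCast]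
      exact Real.rpow_le_rpow_of_exponent_le hz (by push_cast; linarith)
    rw [min_eq_right h2]
    have hp : |u (x + z)| ≤ C * (B * ‖z‖ ^ (2 * b)) :=
      (hg _).trans (by gcongr; exact weight_add_le_of_one_le hb hx hz)
    have hm : |u (x - z)| ≤ C * (B * ‖z‖ ^ (2 * b)) := by
      rw [sub_eq_add_neg]
      refine (hg _).trans ?_
      gcongr
      simpa using weight_add_le_of_one_le (z := -z) hb hx (by simpa using hz)
    have h0 : |u x| ≤ C * (B * ‖z‖ ^ (2 * b)) := by
      refine (hg _).trans ?_
      gcongr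
      have h3 : weight b x ≤ B := by
        rw [hB]; unfold weight
        have := norm_nonneg x
        gcongr
        linarith
      exact h3.trans (le_mul_of_one_le_right hB0 (Real.one_le_rpow hz (by positivity)))
    have h5 : |secondDiff u x z| ≤ |u (x + z)| + |u (x - z)| + 2 * |u x| := by
      unfold secondDiff
      refine (abs_sub _ _).trans ?_
      rw [abs_mul, abs_two]
      gcongr
      exact abs_add_le _ _
    have : 0 ≤ 2 * L * ‖z‖ ^ (2 * b) := by positivity
    linarith

end SecondDiff

/-- The radial majorant `min r² |r|^(2b) / |r|^(1+2s)` of the second difference quotients. -/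
noncomputable def majorant (s b r : ℝ) : ℝ :=
  min (|r| ^ 2) (|r| ^ (2 * b)) / |r| ^ (1 + 2 * s)

theorem majorant_nonneg (s b r : ℝ) : 0 ≤ majorant s b r := by
  unfold majorant; positivity

theorem measurable_majorant (s b : ℝ) : Measurable (majorant s b) := by
  unfold majorant; fun_prop

theorem integrable_majorant {s b : ℝ} (hs1 : s < 1) (hb : b < s) :
    Integrable (majorant s b) := by
  have hIoi : IntegrableOn (majorant s b) (Set.Ioi 0) := by
    rw [← Set.Ioc_union_Ioi_eq_Ioi (zero_le_one' ℝ)]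
    refine IntegrableOn.union ?_ ?_
    · have h := (intervalIntegral.intervalIntegrable_rpow' (a := 0) (b := 1)
        (show -1 < 1 - 2 * s by linarith)).1
      refine Integrable.mono' h (measurable_majorant s b).aestronglyMeasurable ?_
      refine (ae_restrict_iff' measurableSet_Ioc).2 (Filter.Eventually.of_forall fun r hr => ?_)
      rw [Real.norm_of_nonneg (majorant_nonneg _ _ _)]
      unfold majorant
      rw [abs_of_pos hr.1, div_le_iff₀ (Real.rpow_pos_of_pos hr.1 _), ← Real.rpow_add hr.1]
      refine (min_le_left _ _).trans_eq ?_
      rw [← Real.rpow_natCast]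
      congr 1
      push_cast
      ring
    · have h := integrableOn_Ioi_rpow_of_lt (show 2 * b - 1 - 2 * s < -1 by linarith) zero_lt_one
      refine Integrable.mono' h (measurable_majorant s b).aestronglyMeasurable ?_
      refine (ae_restrict_iff' measurableSet_Ioi).2 (Filter.Eventually.of_forall fun r hr => ?_)
      have hr0 : 0 < r := zero_lt_one.trans hr
      rw [Real.norm_of_nonneg (majorant_nonneg _ _ _)]
      unfold majorant
      rw [abs_of_pos hr0, div_le_iff₀ (Real.rpow_pos_of_pos hr0 _), ← Real.rpow_add hr0]
      refine (min_le_right _ _).trans_eq ?_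
      congr 1
      ring
  have hIic : IntegrableOn (majorant s b) (Set.Iic 0) := by
    rw [← Measure.map_neg_eq_self (volume : Measure ℝ)]
    have m : MeasurableEmbedding fun x : ℝ => -x := (Homeomorph.neg ℝ).measurableEmbedding
    rw [m.integrableOn_map_iff]
    have : majorant s b ∘ (fun x : ℝ => -x) = majorant s b := by
      ext r
      simp [majorant]
    rw [this, Set.neg_preimage, Set.neg_Iic, neg_zero]
    exact Iff.mpr integrableOn_Ici_iff_integrableOn_Ioi hIoi
  rw [← integrableOn_univ, ← Set.Iic_union_Ioi (a := (0 : ℝ))]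
  exact hIic.union hIoi

/-- The integrand `b log (b / a) - b + a` of the relative entropy. -/
noncomputable def entropyDiv (b a : ℝ) : ℝ := b * Real.log (b / a) - b + a

theorem entropyDiv_nonneg {a b : ℝ} (ha : 0 < a) (hb : 0 < b) : 0 ≤ entropyDiv b a := by
  unfold entropyDiv
  have h := Real.log_le_sub_one_of_pos (div_pos ha hb)
  have h2 : Real.log (b / a) = -Real.log (a / b) := by
    rw [← Real.log_inv, inv_div]
  have h3 : b * (a / b) = a := by field_simp
  rw [h2]
  nlinarith

theorem eq_of_entropyDiv_eq_zero {a b : ℝ} (ha : 0 < a) (hb : 0 < b) (h0 : entropyDiv b a = 0) :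
    b = a := by
  by_contra hne
  have h := Real.log_lt_sub_one_of_pos (div_pos ha hb) (by
    intro h
    rw [div_eq_one_iff_eq hb.ne'] at h
    exact hne h.symm)
  have h2 : Real.log (b / a) = -Real.log (a / b) := by
    rw [← Real.log_inv, inv_div]
  have h3 : b * (a / b) = a := by field_simp
  unfold entropyDiv at h0
  rw [h2] at h0
  nlinarith

/-- The gradient inequality for the jointly convex function `entropyDiv`. -/
theorem le_entropyDiv {a b a' b' : ℝ} (ha : 0 < a) (hb : 0 < b) (ha' : 0 < a') (hb' : 0 < b') :
    Real.log (b / a) * b' + (1 - b / a) * a' ≤ entropyDiv b' a' := by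
  have h := entropyDiv_nonneg (a := a' * (b / a)) (b := b') (by positivity) hb'
  unfold entropyDiv at h ⊢
  have : Real.log (b' / (a' * (b / a))) = Real.log (b' / a') - Real.log (b / a) := by
    rw [← div_div, Real.log_div (by positivity) (by positivity)]
  rw [this] at h
  linarith

theorem entropyDiv_eq {a b : ℝ} (ha : 0 < a) :
    entropyDiv b a = Real.log (b / a) * b + (1 - b / a) * a := by
  unfold entropyDiv
  field_simp
  ring

theorem mul_log_eq {a b : ℝ} (ha : 0 < a) (hb : 0 < b) :
    b * Real.log b = a * Real.log a + (1 + Real.log a) * (b - a) + entropyDiv b a := by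
  unfold entropyDiv
  rw [Real.log_div hb.ne' ha.ne']
  ring

theorem entropyDiv_le {a b : ℝ} (ha : 1 ≤ a) (hb : 0 < b) :
    entropyDiv b a ≤ b * Real.log b + a := by
  unfold entropyDiv
  rw [Real.log_div hb.ne' (by positivity)]
  nlinarith [mul_nonneg hb.le (Real.log_nonneg ha)]

theorem mul_log_le_rpow {a δ : ℝ} (ha : 0 < a) (hδ : 0 < δ) :
    a * Real.log a ≤ a ^ (1 + δ) / δ := by
  have h := mul_le_mul_of_nonneg_left (Real.log_le_rpow_div ha.le hδ) ha.le
  rwa [← mul_div_assoc, ← Real.rpow_one_add' ha.le (by positivity)] at h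

theorem continuous_entropyDiv {X : Type*} [TopologicalSpace X] {f g : X → ℝ} (hf : Continuous f)
    (hg : Continuous g) (hf0 : ∀ x, 0 < f x) (hg0 : ∀ x, 0 < g x) :
    Continuous fun x => entropyDiv (f x) (g x) := by
  unfold entropyDiv
  exact ((hf.mul ((hf.div hg fun x => (hg0 x).ne').log
    fun x => (div_pos (hf0 x) (hg0 x)).ne')).sub hf).add hg

section Operator

variable {n : ℕ} {s : ℝ} {μ : Measure (Metric.sphere (0 : EuclideanSpace ℝ (Fin n)) 1)}

/-- The point `rϑ` with polar coordinates `(ϑ, r)`. -/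
def polar (p : Metric.sphere (0 : EuclideanSpace ℝ (Fin n)) 1 × ℝ) : EuclideanSpace ℝ (Fin n) :=
  p.2 • (p.1 : EuclideanSpace ℝ (Fin n))

theorem continuous_polar : Continuous (polar (n := n)) := by
  unfold polar; fun_prop

theorem norm_polar (p : Metric.sphere (0 : EuclideanSpace ℝ (Fin n)) 1 × ℝ) :
    ‖polar p‖ = |p.2| := by
  have : ‖(p.1 : EuclideanSpace ℝ (Fin n))‖ = 1 := by simp
  rw [polar, norm_smul, this, mul_one, Real.norm_eq_abs]

theorem opI_eq_integral_secondDiff (u : EuclideanSpace ℝ (Fin n) → ℝ)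
    (x : EuclideanSpace ℝ (Fin n)) :
    opI n s μ u x = ∫ p, secondDiff u x (polar p) / |p.2| ^ (1 + 2 * s) ∂(μ.prod volume) :=
  rfl

theorem abs_secondDiff_polar_div_le {u : EuclideanSpace ℝ (Fin n) → ℝ} {b D : ℝ}
    {x : EuclideanSpace ℝ (Fin n)}
    (h : ∀ z, |secondDiff u x z| ≤ D * min (‖z‖ ^ 2) (‖z‖ ^ (2 * b)))
    (p : Metric.sphere (0 : EuclideanSpace ℝ (Fin n)) 1 × ℝ) :
    |secondDiff u x (polar p) / |p.2| ^ (1 + 2 * s)| ≤ D * majorant s b p.2 := by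
  have := h (polar p)
  rw [norm_polar] at this
  unfold majorant
  rw [abs_div, abs_of_nonneg (by positivity : (0 : ℝ) ≤ |p.2| ^ (1 + 2 * s)), ← mul_div_assoc]
  gcongr

theorem continuous_secondDiff {X : Type*} [TopologicalSpace X]
    {u : EuclideanSpace ℝ (Fin n) → ℝ} (hu : Continuous u)
    {f g : X → EuclideanSpace ℝ (Fin n)} (hf : Continuous f) (hg : Continuous g) :
    Continuous fun x => secondDiff u (f x) (g x) := by
  unfold secondDiff; fun_prop

theorem integrable_majorant_snd [IsFiniteMeasure μ] {b : ℝ} (hs1 : s < 1) (hb : b < s) :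
    Integrable (fun p => majorant s b p.2) (μ.prod volume) :=
  (integrable_majorant hs1 hb).comp_snd μ

theorem integrable_secondDiff_polar_div [IsFiniteMeasure μ]
    {u : EuclideanSpace ℝ (Fin n) → ℝ} (hu : ContDiff ℝ 2 u)
    {b C : ℝ} (hs1 : s < 1) (hb : 0 ≤ b) (hbs : b < s) (hC : 0 ≤ C)
    (hg : ∀ x, |u x| ≤ C * weight b x) (x : EuclideanSpace ℝ (Fin n)) :
    Integrable (fun p => secondDiff u x (polar p) / |p.2| ^ (1 + 2 * s)) (μ.prod volume) := by
  obtain ⟨D, -, hD⟩ := exists_abs_secondDiff_le hu hb (by linarith) hC hg ‖x‖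
  refine Integrable.mono' ((integrable_majorant_snd hs1 hbs).const_mul D) ?_
    (Filter.Eventually.of_forall fun p => abs_secondDiff_polar_div_le (hD x le_rfl) p)
  refine Measurable.aestronglyMeasurable (Measurable.div ?_ (by fun_prop))
  exact (continuous_secondDiff hu.continuous continuous_const continuous_polar).measurable

/-- At a maximum point of `g - ε weight b`, the second differences of `g` are controlled. -/
theorem secondDiff_le_of_isMax {g : EuclideanSpace ℝ (Fin n) → ℝ} {b ε : ℝ} (hb : 0 ≤ b)
    (hb1 : b ≤ 1) (hε : 0 ≤ ε) {x : EuclideanSpace ℝ (Fin n)}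
    (hx : ∀ y, g y - ε * weight b y ≤ g x - ε * weight b x) (z : EuclideanSpace ℝ (Fin n)) :
    secondDiff g x z ≤ 2 * ε * min (‖z‖ ^ 2) (‖z‖ ^ (2 * b)) := by
  have h1 := hx (x + z)
  have h2 := hx (x - z)
  have h3 := mul_le_mul_of_nonneg_left (secondDiff_weight_le hb hb1 x z) hε
  unfold secondDiff at h3 ⊢
  linarith

theorem apply_nonpos_of_opI_eq [IsFiniteMeasure μ] {u : EuclideanSpace ℝ (Fin n) → ℝ}
    (hu : ContDiff ℝ 2 u) {a C : ℝ} (hs1 : s < 1) (ha : 0 ≤ a) (has : a < s) (hC : 0 ≤ C)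
    (hg : ∀ x, |u x| ≤ C * weight a x) {f : ℝ → ℝ} (hf : Continuous f) (hmono : Monotone f)
    (heq : ∀ x, opI n s μ u x = f (u x)) (x : EuclideanSpace ℝ (Fin n)) : f (u x) ≤ 0 := by
  obtain ⟨b, hab, hbs⟩ := exists_between has
  have hb : 0 < b := ha.trans_lt hab
  have hg' : ∀ x, |u x| ≤ C * weight b x := fun x =>
    (hg x).trans (mul_le_mul_of_nonneg_left (weight_mono hab.le x) hC)
  have hsub : IsSubweight b u := isSubweight_of_le hab ha fun x => (le_abs_self _).trans (hg x)
  set H := ∫ p, majorant s b p.2 ∂(μ.prod volume)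
  have key : ∀ ε > 0, f (u x - ε * weight b x) ≤ 2 * ε * H := by
    intro ε hε
    obtain ⟨y, hy⟩ := hsub.exists_max hb hu.continuous hε
    have h1 : opI n s μ u y ≤ 2 * ε * H := by
      rw [opI_eq_integral_secondDiff, ← integral_const_mul]
      refine integral_mono
        (integrable_secondDiff_polar_div hu hs1 hb.le hbs hC hg' y)
        ((integrable_majorant_snd hs1 hbs).const_mul _) fun p => ?_
      have := secondDiff_le_of_isMax hb.le (by linarith) hε.le hy (polar p)
      rw [norm_polar] at this
      simp only [majorant]
      rw [← mul_div_assoc]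
      gcongr
    rw [heq] at h1
    refine (hmono ?_).trans h1
    have : 0 ≤ ε * weight b y := mul_nonneg hε.le (weight_pos b y).le
    linarith [hy x]
  have hl : Filter.Tendsto (fun ε : ℝ => f (u x - ε * weight b x)) (nhdsWithin 0 (Set.Ioi 0))
      (nhds (f (u x - 0 * weight b x))) :=
    ((by fun_prop : Continuous fun ε : ℝ => f (u x - ε * weight b x)).tendsto 0).mono_left
      nhdsWithin_le_nhds
  have hr : Filter.Tendsto (fun ε : ℝ => 2 * ε * H) (nhdsWithin 0 (Set.Ioi 0))
      (nhds (2 * 0 * H)) :=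
    ((by fun_prop : Continuous fun ε : ℝ => 2 * ε * H).tendsto 0).mono_left nhdsWithin_le_nhds
  have := le_of_tendsto_of_tendsto hl hr (by
    filter_upwards [self_mem_nhdsWithin] with ε hε using key ε hε)
  simpa using this

/-- The set of polar coordinates `(ϑ, r)` with `0 ≤ r ≤ 1`. -/
def polarUnit (n : ℕ) : Set (Metric.sphere (0 : EuclideanSpace ℝ (Fin n)) 1 × ℝ) :=
  Set.univ ×ˢ Set.Icc 0 1

theorem isCompact_polarUnit : IsCompact (polarUnit n) :=
  isCompact_univ.prod isCompact_Icc

theorem norm_polar_le_one {p : Metric.sphere (0 : EuclideanSpace ℝ (Fin n)) 1 × ℝ}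
    (hp : p ∈ polarUnit n) : ‖polar p‖ ≤ 1 := by
  rw [norm_polar, abs_of_nonneg hp.2.1]
  exact hp.2.2

theorem integrableOn_polarUnit [IsFiniteMeasure μ]
    {f : Metric.sphere (0 : EuclideanSpace ℝ (Fin n)) 1 × ℝ → ℝ} (hf : Continuous f) :
    IntegrableOn f (polarUnit n) (μ.prod volume) :=
  hf.continuousOn.integrableOn_compact isCompact_polarUnit

theorem integral_average_secondDiff [IsFiniteMeasure μ]
    {u : EuclideanSpace ℝ (Fin n) → ℝ} (hu : ContDiff ℝ 2 u)
    {b C : ℝ} (hs1 : s < 1) (hb : 0 ≤ b) (hbs : b < s) (hC : 0 ≤ C)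
    (hg : ∀ x, |u x| ≤ C * weight b x) (h0 : ∀ x, opI n s μ u x = 0)
    {A : Metric.sphere (0 : EuclideanSpace ℝ (Fin n)) 1 × ℝ → ℝ} (hA : Continuous A)
    (x : EuclideanSpace ℝ (Fin n)) :
    Integrable (fun p => ∫ q in polarUnit n,
      A q * (secondDiff u (x + polar q) (polar p) / |p.2| ^ (1 + 2 * s)) ∂(μ.prod volume))
      (μ.prod volume) ∧
    ∫ p, ∫ q in polarUnit n,
      A q * (secondDiff u (x + polar q) (polar p) / |p.2| ^ (1 + 2 * s)) ∂(μ.prod volume)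
      ∂(μ.prod volume) = 0 := by
  have hfin : IsFiniteMeasure ((μ.prod volume).restrict (polarUnit n)) :=
    ⟨by simpa using isCompact_polarUnit.measure_lt_top⟩
  obtain ⟨D, hD0, hD⟩ := exists_abs_secondDiff_le hu hb (by linarith) hC hg (‖x‖ + 1)
  obtain ⟨M, hM⟩ := isCompact_polarUnit.exists_bound_of_continuousOn
    (hA.continuousOn (s := polarUnit n))
  have hint : Integrable (Function.uncurry fun p q =>
      A q * (secondDiff u (x + polar q) (polar p) / |p.2| ^ (1 + 2 * s)))
      ((μ.prod volume).prod ((μ.prod volume).restrict (polarUnit n))) := by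
    refine Integrable.mono' ((((integrable_majorant_snd hs1 hbs).const_mul D).const_mul M).comp_fst
      ((μ.prod volume).restrict (polarUnit n))) ?_ ?_
    · refine Measurable.aestronglyMeasurable ?_
      refine (hA.measurable.comp measurable_snd).mul (Measurable.div ?_ (by fun_prop))
      exact (continuous_secondDiff hu.continuous
        (continuous_const.add (continuous_polar.comp continuous_snd))
        (continuous_polar.comp continuous_fst)).measurable
    · have hmem := (Measure.quasiMeasurePreserving_snd (μ := μ.prod (volume : Measure ℝ))).ae
        (ae_restrict_mem (μ := μ.prod (volume : Measure ℝ))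
          (isCompact_polarUnit (n := n)).measurableSet)
      filter_upwards [hmem] with pq hpq
      simp only [Function.uncurry, Real.norm_eq_abs, abs_mul]
      have h1 := hM _ hpq
      refine mul_le_mul h1 ?_ (abs_nonneg _) ((norm_nonneg _).trans h1)
      exact abs_secondDiff_polar_div_le
        (hD _ ((norm_add_le _ _).trans (by linarith [norm_polar_le_one hpq]))) pq.1
  refine ⟨hint.integral_prod_left, ?_⟩
  rw [integral_integral_swap hint]
  refine integral_eq_zero_of_ae (Filter.Eventually.of_forall fun q => ?_)
  simp only [integral_const_mul, Pi.zero_apply]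
  rw [← opI_eq_integral_secondDiff, h0, mul_zero]

/-- The average of the relative entropy `entropyDiv (v (x + rϑ)) (v x)` over `0 ≤ r ≤ 1`. -/
noncomputable def entropyAverage (μ : Measure (Metric.sphere (0 : EuclideanSpace ℝ (Fin n)) 1))
    (v : EuclideanSpace ℝ (Fin n) → ℝ) (x : EuclideanSpace ℝ (Fin n)) : ℝ :=
  ∫ q in polarUnit n, entropyDiv (v (x + polar q)) (v x) ∂(μ.prod volume)

theorem continuous_entropyAverage [IsFiniteMeasure μ] {v : EuclideanSpace ℝ (Fin n) → ℝ}
    (hv : Continuous v) (hv1 : ∀ x, 1 ≤ v x) : Continuous (entropyAverage μ v) := by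
  unfold entropyAverage
  have hpos : ∀ x, 0 < v x := fun x => one_pos.trans_le (hv1 x)
  refine continuous_parametric_integral_of_continuous
    (f := fun x q => entropyDiv (v (x + polar q)) (v x)) ?_ isCompact_polarUnit
  exact continuous_entropyDiv
    (hv.comp (continuous_fst.add (continuous_polar.comp continuous_snd)))
    (hv.comp continuous_fst) (fun _ => hpos _) (fun _ => hpos _)

theorem continuous_entropyDiv_polar {v : EuclideanSpace ℝ (Fin n) → ℝ}
    (hv : Continuous v) (hv1 : ∀ x, 1 ≤ v x) (x : EuclideanSpace ℝ (Fin n)) :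
    Continuous fun q => entropyDiv (v (x + polar q)) (v x) :=
  continuous_entropyDiv (hv.comp (continuous_const.add continuous_polar)) continuous_const
    (fun _ => one_pos.trans_le (hv1 _)) (fun _ => one_pos.trans_le (hv1 _))

theorem mul_log_le_weight {v : EuclideanSpace ℝ (Fin n) → ℝ} (hv1 : ∀ x, 1 ≤ v x)
    {a c C : ℝ} (ha : 0 ≤ a) (hac : a < c) (hg : ∀ x, v x ≤ C * weight a x) :
    ∃ D, 0 ≤ D ∧ ∀ x, v x * Real.log (v x) ≤ D * weight c x := by
  have hC : 0 ≤ C := by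
    by_contra h
    push Not at h
    have := mul_neg_of_neg_of_pos h (weight_pos a (0 : EuclideanSpace ℝ (Fin n)))
    linarith [hg 0, hv1 0]
  set δ := (c - a) / (a + 1) with hδ
  have hδ0 : 0 < δ := div_pos (by linarith) (by linarith)
  have hexp : a * (1 + δ) ≤ c := by
    have : (a + 1) * δ = c - a := by rw [hδ]; field_simp
    nlinarith
  refine ⟨C ^ (1 + δ) / δ, by positivity, fun x => ?_⟩
  have hx : 0 < v x := one_pos.trans_le (hv1 x)
  calc v x * Real.log (v x) ≤ v x ^ (1 + δ) / δ := mul_log_le_rpow hx hδ0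
    _ ≤ (C * weight a x) ^ (1 + δ) / δ := by
        gcongr
        exact hg x
    _ = C ^ (1 + δ) / δ * weight (a * (1 + δ)) x := by
        rw [Real.mul_rpow hC (weight_pos a x).le]
        unfold weight
        rw [← Real.rpow_mul (by positivity)]
        ring
    _ ≤ C ^ (1 + δ) / δ * weight c x := by
        gcongr
        exact weight_mono hexp x

theorem entropyAverage_le_weight [IsFiniteMeasure μ] {v : EuclideanSpace ℝ (Fin n) → ℝ}
    (hv : Continuous v) (hv1 : ∀ x, 1 ≤ v x) {c C D : ℝ} (hc : 0 ≤ c)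
    (hg : ∀ x, v x ≤ C * weight c x) (hD : 0 ≤ D)
    (hlog : ∀ x, v x * Real.log (v x) ≤ D * weight c x) :
    ∃ B, ∀ x, entropyAverage μ v x ≤ B * weight c x := by
  refine ⟨(μ.prod volume).real (polarUnit n) * (D * 3 ^ c + C), fun x => ?_⟩
  have hfin : (μ.prod (volume : Measure ℝ)) (polarUnit n) ≠ ⊤ :=
    isCompact_polarUnit.measure_lt_top.ne
  have h := setIntegral_mono_on (μ := μ.prod volume) (s := polarUnit n)
    (integrableOn_polarUnit (continuous_entropyDiv_polar hv hv1 x))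
    (integrableOn_const (C := (D * 3 ^ c + C) * weight c x) hfin)
    isCompact_polarUnit.measurableSet fun q hq => by
      refine (entropyDiv_le (hv1 x) (one_pos.trans_le (hv1 _))).trans ?_
      have h1 := weight_add_le hc x (polar q) (norm_polar_le_one hq)
      have h2 := mul_le_mul_of_nonneg_left h1 hD
      linarith [hlog (x + polar q), hg x]
  rw [setIntegral_const, smul_eq_mul, ← mul_assoc] at h
  exact h

theorem le_secondDiff_entropyAverage [IsFiniteMeasure μ] {v : EuclideanSpace ℝ (Fin n) → ℝ}
    (hv : Continuous v) (hv1 : ∀ x, 1 ≤ v x) (x z : EuclideanSpace ℝ (Fin n)) :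
    (∫ q in polarUnit n, Real.log (v (x + polar q) / v x) * secondDiff v (x + polar q) z
      ∂(μ.prod volume)) +
    (∫ q in polarUnit n, (1 - v (x + polar q) / v x) ∂(μ.prod volume)) * secondDiff v x z
    ≤ secondDiff (entropyAverage μ v) x z := by
  have hpos : ∀ x, 0 < v x := fun x => one_pos.trans_le (hv1 x)
  have hshift : Continuous fun q => v (x + polar q) :=
    hv.comp (continuous_const.add continuous_polar)
  have hdiv : Continuous fun q => v (x + polar q) / v x := hshift.div_const _
  have i1 : IntegrableOn (fun q => Real.log (v (x + polar q) / v x) *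
      secondDiff v (x + polar q) z) (polarUnit n) (μ.prod volume) :=
    integrableOn_polarUnit ((hdiv.log fun q => (div_pos (hpos _) (hpos _)).ne').mul
      (continuous_secondDiff hv (continuous_const.add continuous_polar) continuous_const))
  have i2 : IntegrableOn (fun q => (1 - v (x + polar q) / v x) * secondDiff v x z)
      (polarUnit n) (μ.prod volume) :=
    integrableOn_polarUnit ((continuous_const.sub hdiv).mul continuous_const)
  have j : ∀ y, IntegrableOn (fun q => entropyDiv (v (y + polar q)) (v y)) (polarUnit n)
      (μ.prod volume) := fun y => integrableOn_polarUnit (continuous_entropyDiv_polar hv hv1 y)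
  have j2 : IntegrableOn (fun q => entropyDiv (v (x + z + polar q)) (v (x + z)) +
      entropyDiv (v (x - z + polar q)) (v (x - z))) (polarUnit n) (μ.prod volume) :=
    (j _).add (j _)
  have j3 : IntegrableOn (fun q => 2 * entropyDiv (v (x + polar q)) (v x)) (polarUnit n)
      (μ.prod volume) := (j x).const_mul 2
  unfold secondDiff at i1 i2 ⊢
  unfold entropyAverage
  rw [← integral_mul_const, ← integral_add i1 i2, ← integral_add (j _) (j _),
    ← integral_const_mul, ← integral_sub j2 j3]
  refine integral_mono (i1.add i2) (j2.sub j3) fun q => ?_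
  have h1 := le_entropyDiv (hpos x) (hpos (x + polar q)) (hpos (x + z)) (hpos (x + polar q + z))
  have h2 := le_entropyDiv (hpos x) (hpos (x + polar q)) (hpos (x - z)) (hpos (x + polar q - z))
  have h3 := entropyDiv_eq (b := v (x + polar q)) (hpos x)
  rw [add_right_comm] at h1
  rw [add_sub_right_comm] at h2
  dsimp only
  rw [h3, show x + polar q + z = x + z + polar q by abel,
    show x + polar q - z = x - z + polar q by abel]
  linarith

theorem secondDiff_mul_log {v : EuclideanSpace ℝ (Fin n) → ℝ} (hv1 : ∀ x, 1 ≤ v x)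
    (x z : EuclideanSpace ℝ (Fin n)) :
    secondDiff (fun y => v y * Real.log (v y)) x z = (1 + Real.log (v x)) * secondDiff v x z +
      entropyDiv (v (x + z)) (v x) + entropyDiv (v (x - z)) (v x) := by
  have hpos : ∀ x, 0 < v x := fun x => one_pos.trans_le (hv1 x)
  simp only [secondDiff]
  rw [mul_log_eq (hpos x) (hpos (x + z)), mul_log_eq (hpos x) (hpos (x - z))]
  ring

theorem indicator_entropyDiv_le {v : EuclideanSpace ℝ (Fin n) → ℝ} (hv1 : ∀ x, 1 ≤ v x)
    (hs0 : 0 < s) (x : EuclideanSpace ℝ (Fin n))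
    {p : Metric.sphere (0 : EuclideanSpace ℝ (Fin n)) 1 × ℝ} (hp : p.2 ≠ 0) :
    (polarUnit n).indicator (fun q => entropyDiv (v (x + polar q)) (v x)) p ≤
      entropyDiv (v (x + polar p)) (v x) / |p.2| ^ (1 + 2 * s) := by
  have h0 := entropyDiv_nonneg (one_pos.trans_le (hv1 x)) (one_pos.trans_le (hv1 (x + polar p)))
  by_cases hK : p ∈ polarUnit n
  · rw [Set.indicator_of_mem hK, le_div_iff₀ (by positivity)]
    refine mul_le_of_le_one_right h0 (Real.rpow_le_one (abs_nonneg _) ?_ (by linarith))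
    rw [← norm_polar]
    exact norm_polar_le_one hK
  · rw [Set.indicator_of_notMem hK]
    positivity

/-- At a maximum point of `v log v + T * entropyAverage - ε weight b`, the entropy average is
small. -/
theorem entropyAverage_le_of_isMax [IsFiniteMeasure μ] {v : EuclideanSpace ℝ (Fin n) → ℝ}
    (hv : ContDiff ℝ 2 v) (hv1 : ∀ x, 1 ≤ v x) {b C : ℝ} (hs0 : 0 < s) (hs1 : s < 1)
    (hb : 0 ≤ b) (hbs : b < s) (hC : 0 ≤ C) (hg : ∀ x, |v x| ≤ C * weight b x)
    (h0 : ∀ x, opI n s μ v x = 0) {T ε : ℝ} (hT : 0 ≤ T) (hε : 0 ≤ ε)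
    {x : EuclideanSpace ℝ (Fin n)}
    (hx : ∀ y, v y * Real.log (v y) + T * entropyAverage μ v y - ε * weight b y ≤
      v x * Real.log (v x) + T * entropyAverage μ v x - ε * weight b x) :
    entropyAverage μ v x ≤ 2 * ε * ∫ p, majorant s b p.2 ∂(μ.prod volume) := by
  have hpos : ∀ x, 0 < v x := fun x => one_pos.trans_le (hv1 x)
  set A : Metric.sphere (0 : EuclideanSpace ℝ (Fin n)) 1 × ℝ → ℝ :=
    fun q => Real.log (v (x + polar q) / v x) with hAdef
  have hA : Continuous A :=
    ((hv.continuous.comp (continuous_const.add continuous_polar)).div_const _).log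
      fun q => (div_pos (hpos _) (hpos _)).ne'
  set B := ∫ q in polarUnit n, (1 - v (x + polar q) / v x) ∂(μ.prod volume) with hB
  obtain ⟨iA, hA0⟩ := integral_average_secondDiff hv hs1 hb hbs hC hg h0 hA x
  have iv := integrable_secondDiff_polar_div (μ := μ) hv hs1 hb hbs hC hg x
  have iE : Integrable ((polarUnit n).indicator fun q => entropyDiv (v (x + polar q)) (v x))
      (μ.prod volume) :=
    (integrableOn_polarUnit (continuous_entropyDiv_polar hv.continuous hv1 x)).integrable_indicator
      isCompact_polarUnit.measurableSet
  have iEv : Integrable (fun p => (polarUnit n).indicator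
      (fun q => entropyDiv (v (x + polar q)) (v x)) p + (1 + Real.log (v x) + T * B) *
        (secondDiff v x (polar p) / |p.2| ^ (1 + 2 * s))) (μ.prod volume) :=
    iE.add (iv.const_mul _)
  have hmono := integral_mono (iEv.add (iA.const_mul T))
    ((integrable_majorant_snd (μ := μ) hs1 hbs).const_mul (2 * ε)) fun p => ?_
  · simp only [Pi.add_apply] at hmono
    rw [integral_add iEv (iA.const_mul T), integral_add iE (iv.const_mul _),
      integral_const_mul, integral_const_mul, integral_const_mul, hA0,
      ← opI_eq_integral_secondDiff, h0,
      integral_indicator isCompact_polarUnit.measurableSet] at hmono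
    simpa [entropyAverage] using hmono
  · simp only [Pi.add_apply]
    by_cases hp : p.2 = 0
    · have hz : polar p = 0 := by simp [polar, hp]
      have hex : (1 + 2 * s) ≠ 0 := by positivity
      have hE : entropyDiv (v x) (v x) = 0 := by
        simp [entropyDiv, div_self (hpos x).ne']
      have := mul_nonneg hε (majorant_nonneg s b 0)
      simp only [hp, abs_zero, Real.zero_rpow hex, div_zero, mul_zero, integral_zero, add_zero]
      refine le_trans ?_ (by positivity : 0 ≤ 2 * (ε * majorant s b 0)) |>.trans_eq (by ring)
      refine Set.indicator_apply_le' (fun _ => ?_) fun _ => le_rfl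
      rw [hz, add_zero, hE]
    · have hρ : 0 < |p.2| ^ (1 + 2 * s) := by positivity
      have hmax := secondDiff_le_of_isMax
        (g := fun y => v y * Real.log (v y) + T * entropyAverage μ v y)
        hb (by linarith) hε hx (polar p)
      have hsplit : secondDiff (fun y => v y * Real.log (v y) + T * entropyAverage μ v y) x
          (polar p) = secondDiff (fun y => v y * Real.log (v y)) x (polar p) +
            T * secondDiff (entropyAverage μ v) x (polar p) := by
        simp only [secondDiff]; ring
      rw [hsplit, secondDiff_mul_log hv1, norm_polar] at hmax
      have hav := mul_le_mul_of_nonneg_left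
        (le_secondDiff_entropyAverage (μ := μ) hv.continuous hv1 x (polar p)) hT
      have hind := indicator_entropyDiv_le hv1 hs0 x hp
      have hminus := entropyDiv_nonneg (hpos x) (hpos (x - polar p))
      rw [le_div_iff₀ hρ] at hind
      have hpull : ∫ q in polarUnit n,
          A q * (secondDiff v (x + polar q) (polar p) / |p.2| ^ (1 + 2 * s)) ∂(μ.prod volume) =
          (∫ q in polarUnit n, A q * secondDiff v (x + polar q) (polar p) ∂(μ.prod volume)) /
            |p.2| ^ (1 + 2 * s) := by
        rw [← integral_div]
        simp only [mul_div_assoc]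
      rw [hpull]
      unfold majorant
      rw [← mul_div_assoc, ← mul_div_assoc, ← mul_div_assoc, le_div_iff₀ hρ, add_mul, add_mul,
        div_mul_cancel₀ _ hρ.ne', div_mul_cancel₀ _ hρ.ne']
      linarith

theorem entropyAverage_nonpos [IsFiniteMeasure μ] {v : EuclideanSpace ℝ (Fin n) → ℝ}
    (hv : ContDiff ℝ 2 v) (hv1 : ∀ x, 1 ≤ v x) {a C : ℝ} (hs0 : 0 < s) (hs1 : s < 1)
    (ha : 0 ≤ a) (has : a < s) (hC : 0 ≤ C) (hg : ∀ x, v x ≤ C * weight a x)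
    (h0 : ∀ x, opI n s μ v x = 0) (x : EuclideanSpace ℝ (Fin n)) :
    entropyAverage μ v x ≤ 0 := by
  obtain ⟨c, hac, hcs⟩ := exists_between has
  obtain ⟨b, hcb, hbs⟩ := exists_between hcs
  have hc : 0 < c := ha.trans_lt hac
  have hb : 0 < b := hc.trans hcb
  have hpos : ∀ x, 0 < v x := fun x => one_pos.trans_le (hv1 x)
  obtain ⟨D, hD, hlog⟩ := mul_log_le_weight hv1 ha hac hg
  have hgc : ∀ x, v x ≤ C * weight c x := fun x =>
    (hg x).trans (mul_le_mul_of_nonneg_left (weight_mono hac.le x) hC)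
  have hgb : ∀ x, |v x| ≤ C * weight b x := fun x => by
    rw [abs_of_pos (hpos x)]
    exact (hgc x).trans (mul_le_mul_of_nonneg_left (weight_mono hcb.le x) hC)
  obtain ⟨B, hB⟩ := entropyAverage_le_weight (μ := μ) hv.continuous hv1 hc.le hgc hD hlog
  have hwsub : IsSubweight b fun y => v y * Real.log (v y) := isSubweight_of_le hcb hc.le hlog
  have hwcont : Continuous fun y => v y * Real.log (v y) :=
    hv.continuous.mul (hv.continuous.log fun y => (hpos y).ne')
  set H := ∫ p, majorant s b p.2 ∂(μ.prod volume)
  have hH : 0 ≤ H := integral_nonneg fun p => majorant_nonneg s b p.2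
  have hsmall : ∀ ε > 0, entropyAverage μ v x ≤ 2 * ε * H := by
    intro ε hε
    obtain ⟨M, hM⟩ := hwsub ε hε
    have hbound : ∀ T > 0, T * (entropyAverage μ v x - 2 * ε * H) ≤ M + ε * weight b x := by
      intro T hT
      have hsub : IsSubweight b fun y => v y * Real.log (v y) + T * entropyAverage μ v y :=
        hwsub.add (isSubweight_of_le (C := T * B) hcb hc.le fun y => by
          rw [mul_assoc]
          exact mul_le_mul_of_nonneg_left (hB y) hT.le)
      obtain ⟨y, hy⟩ := hsub.exists_max hb
        (hwcont.add (continuous_const.mul (continuous_entropyAverage hv.continuous hv1))) hε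
      have h1 := entropyAverage_le_of_isMax hv hv1 hs0 hs1 hb.le hbs hC hgb h0 hT.le hε.le hy
      have h2 := mul_le_mul_of_nonneg_left h1 hT.le
      have h3 := mul_nonneg (hpos x).le (Real.log_nonneg (hv1 x))
      linarith [hy x, hM y]
    by_contra hcon
    push Not at hcon
    have hd : 0 < entropyAverage μ v x - 2 * ε * H := by linarith
    have h1 := hbound ((|M + ε * weight b x| + 1) / (entropyAverage μ v x - 2 * ε * H))
      (by positivity)
    rw [div_mul_cancel₀ _ hd.ne'] at h1
    linarith [le_abs_self (M + ε * weight b x)]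
  refine le_of_forall_pos_le_add fun η hη => ?_
  have h1 := hsmall (η / (2 * H + 1)) (by positivity)
  have h2 : η / (2 * H + 1) * (2 * H + 1) = η := by field_simp
  have h3 : 0 < η / (2 * H + 1) := by positivity
  nlinarith

theorem fderiv_eq_zero_ae [IsFiniteMeasure μ] {v : EuclideanSpace ℝ (Fin n) → ℝ}
    (hv : Differentiable ℝ v) (hv1 : ∀ x, 1 ≤ v x) {x : EuclideanSpace ℝ (Fin n)}
    (h : entropyAverage μ v x ≤ 0) :
    ∀ᵐ ϑ : Metric.sphere (0 : EuclideanSpace ℝ (Fin n)) 1 ∂μ,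
      fderiv ℝ v x (ϑ : EuclideanSpace ℝ (Fin n)) = 0 := by
  have hpos : ∀ x, 0 < v x := fun x => one_pos.trans_le (hv1 x)
  have hnn : ∀ q : Metric.sphere (0 : EuclideanSpace ℝ (Fin n)) 1 × ℝ,
      0 ≤ entropyDiv (v (x + polar q)) (v x) := fun q => entropyDiv_nonneg (hpos _) (hpos _)
  have hz := (integral_eq_zero_iff_of_nonneg hnn
    (integrableOn_polarUnit (continuous_entropyDiv_polar hv.continuous hv1 x))).1
    (le_antisymm h (integral_nonneg hnn))
  rw [polarUnit, ← Measure.prod_restrict, Measure.restrict_univ] at hz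
  filter_upwards [Measure.ae_ae_of_ae_prod hz] with ϑ hϑ
  have hcont : Continuous fun r : ℝ => v (x + r • (ϑ : EuclideanSpace ℝ (Fin n))) :=
    hv.continuous.comp (by fun_prop)
  have heq : Set.EqOn (fun r : ℝ => v (x + r • (ϑ : EuclideanSpace ℝ (Fin n))))
      (fun _ => v x) (Set.Icc 0 1) := by
    refine Measure.eqOn_Icc_of_ae_eq volume zero_ne_one ?_ hcont.continuousOn
      continuousOn_const
    filter_upwards [hϑ] with r hr
    exact eq_of_entropyDiv_eq_zero (hpos _) (hpos _) hr
  have hline : HasDerivAt (fun r : ℝ => x + r • (ϑ : EuclideanSpace ℝ (Fin n)))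
      (ϑ : EuclideanSpace ℝ (Fin n)) 0 := by
    simpa using ((hasDerivAt_id (0 : ℝ)).smul_const (ϑ : EuclideanSpace ℝ (Fin n))).const_add x
  have hd : HasDerivAt (fun r : ℝ => v (x + r • (ϑ : EuclideanSpace ℝ (Fin n))))
      (fderiv ℝ v x ϑ) 0 :=
    HasFDerivAt.comp_hasDerivAt (l := v) 0 (by simpa using (hv x).hasFDerivAt) hline
  have h1 : HasDerivWithinAt (fun r : ℝ => v (x + r • (ϑ : EuclideanSpace ℝ (Fin n)))) 0
      (Set.Icc 0 1) 0 :=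
    (hasDerivWithinAt_const (0 : ℝ) (Set.Icc 0 1) (v x)).congr (fun r hr => heq hr)
      (heq (by simp))
  exact (uniqueDiffOn_Icc zero_lt_one 0 (by simp)).eq_deriv _ hd.hasDerivWithinAt h1

/-- A Liouville theorem for semibounded functions of subcritical growth. -/
theorem exists_eq_const_of_opI_eq_zero [IsFiniteMeasure μ] {v : EuclideanSpace ℝ (Fin n) → ℝ}
    (hv : ContDiff ℝ 2 v) (hv1 : ∀ x, 1 ≤ v x) {a C : ℝ} (hs0 : 0 < s) (hs1 : s < 1)
    (ha : 0 ≤ a) (has : a < s) (hC : 0 ≤ C) (hg : ∀ x, v x ≤ C * weight a x)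
    (h0 : ∀ x, opI n s μ v x = 0) {lam : ℝ} (hlam : 0 < lam)
    (hnondeg : ∀ ν : Metric.sphere (0 : EuclideanSpace ℝ (Fin n)) 1,
      lam ≤ ∫ ϑ : Metric.sphere (0 : EuclideanSpace ℝ (Fin n)) 1,
        |⟪(ν : EuclideanSpace ℝ (Fin n)), (ϑ : EuclideanSpace ℝ (Fin n))⟫| ^ (2 * s) ∂μ)
    (x y : EuclideanSpace ℝ (Fin n)) : v x = v y := by
  have hdiff : Differentiable ℝ v := hv.differentiable (by norm_num)
  refine is_const_of_fderiv_eq_zero hdiff (fun x => ?_) x y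
  have hae := fderiv_eq_zero_ae hdiff hv1
    (entropyAverage_nonpos hv hv1 hs0 hs1 ha has hC hg h0 x)
  by_contra hne
  set w := (InnerProductSpace.toDual ℝ (EuclideanSpace ℝ (Fin n))).symm (fderiv ℝ v x) with hw
  have hw0 : w ≠ 0 := by
    rw [hw]
    simpa using hne
  have hle := hnondeg ⟨‖w‖⁻¹ • w, by simp [norm_smul, hw0]⟩
  rw [integral_eq_zero_of_ae] at hle
  · linarith
  · filter_upwards [hae] with ϑ hϑ
    have : ⟪w, (ϑ : EuclideanSpace ℝ (Fin n))⟫ = 0 := by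
      rw [hw, InnerProductSpace.toDual_symm_apply, hϑ]
    simp [real_inner_smul_left, this, Real.zero_rpow (by positivity : 2 * s ≠ 0)]

end Operator

/-- If `f` is continuous and nondecreasing, `u ∈ C²(ℝⁿ)` solves `ℐu = f(u)` in `ℝⁿ`,
`|u(x)| ≤ K(1+|x|^κ)` with `κ ∈ [0,2s)`, and `f` is not identically zero, then `u` is
constant, say `u ≡ c`, with `f(c) = 0`. -/
theorem constant_of_semilinear_of_subcritical_growth
    (n : ℕ) (hn : 1 ≤ n) (s : ℝ) (hs : s ∈ Set.Ioo (0 : ℝ) 1)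
    (μ : Measure (Metric.sphere (0 : EuclideanSpace ℝ (Fin n)) 1)) [IsFiniteMeasure μ]
    (lam Λ : ℝ) (hlam : 0 < lam) (hΛ : 0 < Λ)
    (hnondeg : ∀ ν : Metric.sphere (0 : EuclideanSpace ℝ (Fin n)) 1,
      lam ≤ ∫ ϑ : Metric.sphere (0 : EuclideanSpace ℝ (Fin n)) 1,
        |⟪(ν : EuclideanSpace ℝ (Fin n)), (ϑ : EuclideanSpace ℝ (Fin n))⟫| ^ (2 * s) ∂μ)
    (hμΛ : μ Set.univ ≤ ENNReal.ofReal Λ)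
    (f : ℝ → ℝ) (hf_cont : Continuous f) (hf_mono : Monotone f)
    (u : EuclideanSpace ℝ (Fin n) → ℝ) (hu : ContDiff ℝ 2 u)
    (heq : ∀ x, opI n s μ u x = f (u x))
    (K κ : ℝ) (hK : 0 ≤ K) (hκ0 : 0 ≤ κ) (hκ : κ < 2 * s)
    (hgrowth : ∀ x, |u x| ≤ K * (1 + ‖x‖ ^ κ))
    (hf_ne : ∃ r, f r ≠ 0) :
    ∃ c : ℝ, (∀ x, u x = c) ∧ f c = 0 := by
  obtain ⟨hs0, hs1⟩ := hs
  have ha : 0 ≤ κ / 2 := by positivity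
  have has : κ / 2 < s := by linarith
  have hw1 : ∀ x : EuclideanSpace ℝ (Fin n), 1 ≤ weight (κ / 2) x := fun x =>
    Real.one_le_rpow (by nlinarith [sq_nonneg ‖x‖]) ha
  have hg : ∀ x, |u x| ≤ 2 * K * weight (κ / 2) x := fun x => by
    have := rpow_norm_le_weight hκ0 x
    nlinarith [hgrowth x, hw1 x]
  have hneg : ∀ x, opI n s μ (-u) x = -opI n s μ u x := fun x => by
    simp only [opI, Pi.neg_apply]
    rw [← integral_neg]
    congr with p
    ring
  have hfu : ∀ x, f (u x) = 0 := by
    intro x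
    refine le_antisymm
      (apply_nonpos_of_opI_eq hu hs1 ha has (by positivity) hg hf_cont hf_mono heq x) ?_
    have := apply_nonpos_of_opI_eq (μ := μ) (u := -u) (C := 2 * K)
      (f := fun t => -f (-t)) hu.neg hs1 ha has
      (by positivity) (by simpa using hg) (by fun_prop)
      (fun _ _ hab => neg_le_neg (hf_mono (neg_le_neg hab))) (fun x => by simp [hneg, heq]) x
    simpa using this
  have hu0 : ∀ x, opI n s μ u x = 0 := fun x => (heq x).trans (hfu x)
  obtain ⟨r, hr⟩ := hf_ne
  refine ⟨u 0, fun x => ?_, hfu 0⟩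
  have hgrow : ∀ (t : ℝ) (y : EuclideanSpace ℝ (Fin n)),
      t + |u y| ≤ (|t| + 2 * K) * weight (κ / 2) y := fun t y => by
    nlinarith [hg y, hw1 y, le_abs_self t, abs_nonneg t]
  rcases hr.lt_or_gt with hlt | hgt
  · have hle : ∀ y, r ≤ u y := fun y => by
      by_contra h
      push Not at h
      linarith [hf_mono h.le, hfu y]
    have := exists_eq_const_of_opI_eq_zero (μ := μ) (v := fun y => (1 - r) + u y)
      (contDiff_const.add hu) (fun y => by linarith [hle y]) hs0 hs1 ha has
      (by positivity : 0 ≤ |1 - r| + 2 * K)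
      (fun y => (by linarith [le_abs_self (u y)] : _ ≤ (1 - r) + |u y|).trans (hgrow _ y))
      (fun y => by
        rw [← hu0 y]
        unfold opI
        congr with p
        ring) hlam hnondeg x 0
    simpa using this
  · have hle : ∀ y, u y ≤ r := fun y => by
      by_contra h
      push Not at h
      linarith [hf_mono h.le, hfu y]
    have := exists_eq_const_of_opI_eq_zero (μ := μ) (v := fun y => (1 + r) + (-u) y)
      (contDiff_const.add hu.neg)
      (fun y => by simp only [Pi.neg_apply]; linarith [hle y]) hs0 hs1 ha has
      (by positivity : 0 ≤ |1 + r| + 2 * K)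
      (fun y => (by simp only [Pi.neg_apply]; linarith [neg_abs_le (u y)] :
        _ ≤ (1 + r) + |u y|).trans (hgrow _ y))
      (fun y => by
        rw [← neg_eq_zero.2 (hu0 y), ← hneg y]
        unfold opI
        congr with p
        ring) hlam hnondeg x 0
    simpa using this
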